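/- Let f : [0,∞) → [0,∞) be a continuous operator monotone function. Then there exist: a Lebesgue-integrable function g : [0,1] → [0,∞); a countable set D ⊆ [0,1] and a family of nonnegative reals {a_t}_{t∈D} with ∑_{t∈D} a_t < ∞; and a finite Borel measure μ_sc on [0,1] that has no atoms and is mutually singular with Lebesgue measure m on [0,1]; such that for every x ∈ [0,∞), f(x) = ∫_{[0,1]} g(t)·(1 !_t x) dm(t) + ∑_{t∈D} a_t·(1 !_t x) + ∫_{[0,1]} (1 !_t x) dμ_sc(t). Moreover, each of the three summands, as a function of x, is operator monotone. -/

import Mathlib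

open MeasureTheory Real ComplexOrder

/-- The `t`-weighted harmonic mean `1 !_t x` of `1` and `x`, for `t ∈ [0,1]`, `x ∈ [0,∞)`. -/
noncomputable def whm (t x : ℝ) : ℝ :=
  if t = 0 ∧ x = 0 then 1 else x / ((1 - t) * x + t)

/-- `f` is operator monotone on `[0,∞)`: for all `n` and all positive semidefinite complex
`n × n` matrices `A ≤ B` (Loewner order), `f(A) ≤ f(B)` via the continuous functional
calculus. -/
def OperatorMonotone (f : ℝ → ℝ) : Prop :=
  ∀ (n : ℕ) (A B : Matrix (Fin n) (Fin n) ℂ),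
    A.PosSemidef → B.PosSemidef → (B - A).PosSemidef →
    (cfc f B - cfc f A).PosSemidef

/-- Lebesgue measure `m` on the unit interval `[0,1]`. -/
noncomputable def lebIcc : Measure (Set.Icc (0 : ℝ) 1) :=
  (volume : Measure ℝ).comap Subtype.val


open Matrix in
lemma cont_spec {n : ℕ} (A : Matrix (Fin n) (Fin n) ℂ) (f : ℝ → ℝ) :
    ContinuousOn f (spectrum ℝ A) := by
  have : Finite (spectrum ℝ A) := inferInstance
  rw [continuousOn_iff_continuous_domRestrict]; fun_prop

lemma quad_form {n : ℕ} (A : Matrix (Fin n) (Fin n) ℂ) (hA : A.PosSemidef) (v : Fin n → ℂ) :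
    ∃ (l : Fin n → ℝ) (p : Fin n → ℝ), (∀ i, 0 ≤ l i) ∧ (∀ f : ℝ → ℝ,
      star v ⬝ᵥ (cfc f A).mulVec v = ((∑ i, f (l i) * p i : ℝ) : ℂ)) := by
  refine ⟨hA.1.eigenvalues, fun i => ‖(star (hA.1.eigenvectorUnitary : Matrix (Fin n) (Fin n) ℂ)).mulVec v i‖ ^ 2,
    hA.eigenvalues_nonneg, fun f => ?_⟩
  rw [hA.1.cfc_eq, Matrix.IsHermitian.cfc, Unitary.conjStarAlgAut_apply, ← Matrix.mulVec_mulVec,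
    ← Matrix.mulVec_mulVec, Matrix.dotProduct_mulVec]
  have h1 : Matrix.vecMul (star v) (hA.1.eigenvectorUnitary : Matrix (Fin n) (Fin n) ℂ) =
      star ((star (hA.1.eigenvectorUnitary : Matrix (Fin n) (Fin n) ℂ)).mulVec v) := by
    rw [Matrix.star_mulVec, Matrix.star_eq_conjTranspose, Matrix.conjTranspose_conjTranspose]
  rw [h1]
  set w := (star (hA.1.eigenvectorUnitary : Matrix (Fin n) (Fin n) ℂ)).mulVec v
  simp only [dotProduct, Matrix.mulVec_diagonal]
  push_cast
  refine Finset.sum_congr rfl fun i _ => ?_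
  have := Complex.conj_mul' (w i)
  simp only [Pi.star_apply, Function.comp_apply, RCLike.star_def]
  rw [← this]
  simp
  ring

lemma matrix_inv_anti {n : ℕ} (A B : Matrix (Fin n) (Fin n) ℂ) (hA : A.PosDef) (hB : B.PosDef)
    (h : (B - A).PosSemidef) : (A⁻¹ - B⁻¹).PosSemidef := by
  have h1 : (Matrix.fromBlocks B 1 (Matrix.conjTranspose 1) A⁻¹).PosSemidef := by
    have := hA.inv.isUnit.invertible
    rw [Matrix.PosDef.fromBlocks₂₂ _ _ hA.inv]
    rw [Matrix.nonsing_inv_nonsing_inv]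
    · simpa using h
    · exact (Matrix.isUnit_iff_isUnit_det _).1 hA.isUnit
  have := hB.isUnit.invertible
  rw [Matrix.PosDef.fromBlocks₁₁ _ _ hB] at h1
  simpa using h1

lemma opMono_whm (t : ℝ) (ht : t ∈ Set.Icc (0:ℝ) 1) : OperatorMonotone (whm t) := by
  intro n A B hA hB hAB
  have hspec : ∀ (C : Matrix (Fin n) (Fin n) ℂ), C.PosSemidef → ∀ x ∈ spectrum ℝ C, 0 ≤ x := by
    intro C hC x hx
    rw [hC.1.spectrum_real_eq_range_eigenvalues] at hx
    obtain ⟨i, rfl⟩ := hx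
    exact hC.eigenvalues_nonneg i
  rcases eq_or_lt_of_le ht.1 with h0 | h0
  · subst h0
    have : ∀ (C : Matrix (Fin n) (Fin n) ℂ), C.PosSemidef → cfc (whm 0) C = 1 := by
      intro C hC
      rw [← cfc_one ℝ C hC.1.isSelfAdjoint]
      apply cfc_congr
      intro x _
      by_cases hx : x = 0 <;> simp [whm, hx]
    rw [this A hA, this B hB, sub_self]
    exact Matrix.PosSemidef.zero
  rcases eq_or_lt_of_le ht.2 with h1 | h1
  · subst h1
    have : ∀ (C : Matrix (Fin n) (Fin n) ℂ), C.PosSemidef → cfc (whm 1) C = C := by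
      intro C hC
      conv_rhs => rw [← cfc_id ℝ C hC.1.isSelfAdjoint]
      apply cfc_congr
      intro x _
      simp [whm]
    rw [this A hA, this B hB]
    exact hAB
  have h1' : 0 < 1 - t := by linarith
  have hpd : ∀ (C : Matrix (Fin n) (Fin n) ℂ), C.PosSemidef → (((1 - t : ℝ)) • C + t • (1 : Matrix (Fin n) (Fin n) ℂ)).PosDef := by
    intro C hC
    apply Matrix.PosDef.posSemidef_add
    · exact hC.smul h1'.le
    · exact Matrix.PosDef.one.smul h0
  have key : ∀ (C : Matrix (Fin n) (Fin n) ℂ), C.PosSemidef → cfc (whm t) C =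
      (1 - t)⁻¹ • (1 - t • (((1 - t : ℝ)) • C + t • (1 : Matrix (Fin n) (Fin n) ℂ))⁻¹) := by
    intro C hC
    have e1 : cfc (fun x : ℝ => (1 - t) * x + t) C = ((1 - t : ℝ)) • C + t • (1 : Matrix (Fin n) (Fin n) ℂ) := by
      rw [cfc_add (a := C) (fun x : ℝ => (1 - t) * x) (fun _ => t) (cont_spec _ _) (cont_spec _ _),
        cfc_const_mul_id (1 - t) C hC.1.isSelfAdjoint, cfc_const t C hC.1.isSelfAdjoint, Algebra.algebraMap_eq_smul_one]
    have e2 : (((1 - t : ℝ)) • C + t • (1 : Matrix (Fin n) (Fin n) ℂ))⁻¹ = cfc (fun x : ℝ => ((1 - t) * x + t)⁻¹) C := by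
      apply Matrix.inv_eq_right_inv
      rw [← e1, ← cfc_mul _ _ C (cont_spec _ _) (cont_spec _ _), ← cfc_one ℝ C hC.1.isSelfAdjoint]
      apply cfc_congr
      intro x hx
      have := hspec C hC x hx
      have : (1 - t) * x + t ≠ 0 := by positivity
      simp [this]
    rw [e2, ← cfc_one ℝ C hC.1.isSelfAdjoint, ← cfc_smul t _ C (cont_spec _ _), ← cfc_sub _ _ C (cont_spec _ _) (cont_spec _ _),
      ← cfc_smul _ _ C (cont_spec _ _)]
    apply cfc_congr
    intro x hx
    have := hspec C hC x hx
    have h3 : (1 - t) * x + t ≠ 0 := by positivity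
    have h4 : 1 - t ≠ 0 := by positivity
    simp [whm, h0.ne']
    field_simp
    ring
  rw [key A hA, key B hB, ← smul_sub]
  apply Matrix.PosSemidef.smul _ (by positivity)
  rw [sub_sub_sub_cancel_left, ← smul_sub]
  apply Matrix.PosSemidef.smul _ h0.le
  apply matrix_inv_anti _ _ (hpd A hA) (hpd B hB)
  rw [add_sub_add_right_eq_sub, ← smul_sub]
  exact hAB.smul h1'.le


lemma opMono_integral {T : Type*} [MeasurableSpace T] (ν : Measure T) (k : T → ℝ → ℝ)
    (hk : ∀ t, OperatorMonotone (k t)) (hi : ∀ x, 0 ≤ x → Integrable (fun t => k t x) ν) :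
    OperatorMonotone (fun x => ∫ t, k t x ∂ν) := by
  intro n A B hA hB hAB
  refine Matrix.PosSemidef.of_dotProduct_mulVec_nonneg ?_ ?_
  · exact Matrix.IsHermitian.sub (cfc_predicate (R := ℝ) (p := IsSelfAdjoint) _ B)
      (cfc_predicate (R := ℝ) (p := IsSelfAdjoint) _ A)
  · intro v
    obtain ⟨l, p, hl, hlp⟩ := quad_form A hA v
    obtain ⟨l', p', hl', hlp'⟩ := quad_form B hB v
    rw [Matrix.sub_mulVec, dotProduct_sub, hlp, hlp', ← Complex.ofReal_sub]
    rw [Complex.zero_le_real]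
    simp_rw [← integral_mul_const]
    rw [← integral_finsetSum _ (fun i _ => (hi _ (hl i)).mul_const _),
      ← integral_finsetSum _ (fun i _ => (hi _ (hl' i)).mul_const _), ← integral_sub]
    · apply integral_nonneg
      intro t
      have h1 := (hk t n A B hA hB hAB).dotProduct_mulVec_nonneg v
      rw [Matrix.sub_mulVec, dotProduct_sub, hlp, hlp', ← Complex.ofReal_sub,
        Complex.zero_le_real] at h1
      exact h1
    · exact integrable_finsetSum _ (fun i _ => (hi _ (hl' i)).mul_const _)
    · exact integrable_finsetSum _ (fun i _ => (hi _ (hl i)).mul_const _)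

lemma opMono_const_mul (c : ℝ) (hc : 0 ≤ c) (f : ℝ → ℝ) (hf : OperatorMonotone f) :
    OperatorMonotone (fun x => c * f x) := by
  intro n A B hA hB hAB
  rw [cfc_const_mul c f B (cont_spec _ _), cfc_const_mul c f A (cont_spec _ _), ← smul_sub]
  exact (hf n A B hA hB hAB).smul hc

lemma cfc_conj_diag {m : ℕ} (O : Matrix (Fin m) (Fin m) ℂ) (hO : O * star O = 1)
    (d : Fin m → ℝ) (f : ℝ → ℝ) :
    cfc f (O * Matrix.diagonal (fun i => (d i : ℂ)) * star O) =
      O * Matrix.diagonal (fun i => (f (d i) : ℂ)) * star O := by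
  classical
  have hO' : star O * O = 1 := mul_eq_one_comm.1 hO
  set B := O * Matrix.diagonal (fun i => (d i : ℂ)) * star O with hB
  have hBs : IsSelfAdjoint B := by
    rw [hB, isSelfAdjoint_iff, star_mul, star_mul, star_star, mul_assoc]
    congr 2
    rw [Matrix.star_eq_conjTranspose, Matrix.diagonal_conjTranspose]
    congr 1
    ext i
    simp
  have hfin : (spectrum ℝ B ∪ Set.range d).Finite :=
    (Set.toFinite _).union (Set.toFinite _)
  set s := hfin.toFinset
  set p := Lagrange.interpolate s id f
  have hp : ∀ x ∈ spectrum ℝ B ∪ Set.range d, p.eval x = f x := by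
    intro x hx
    exact Lagrange.eval_interpolate_at_node (v := id) f Function.injective_id.injOn
      (hfin.mem_toFinset.2 hx)
  have e1 : cfc f B = cfc p.eval B := cfc_congr (fun x hx => (hp x (Or.inl hx)).symm)
  rw [e1, cfc_polynomial p B hBs]
  have e2 : (fun i => ((f (d i) : ℝ) : ℂ)) = fun i => ((p.eval (d i) : ℝ) : ℂ) := by
    ext i; rw [hp _ (Or.inr ⟨i, rfl⟩)]
  rw [e2]
  induction p using Polynomial.induction_on' with
  | add p q hp hq =>
    rw [map_add, hp, hq, ← add_mul, ← mul_add, Matrix.diagonal_add]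
    simp
  | monomial n a =>
    have : B ^ n = O * Matrix.diagonal (fun i => ((d i) ^ n : ℂ)) * star O := by
      induction n with
      | zero => simp [hO]
      | succ n ih =>
        rw [pow_succ, ih, hB]
        calc _ = O * Matrix.diagonal (fun i => ((d i) ^ n : ℂ)) * (star O * O) *
              Matrix.diagonal (fun i => (d i : ℂ)) * star O := by simp only [mul_assoc]
          _ = _ := by
            rw [hO', mul_one, mul_assoc O, Matrix.diagonal_mul_diagonal]
            simp [pow_succ]
    rw [Polynomial.aeval_monomial, this, Algebra.algebraMap_eq_smul_one, smul_mul_assoc, one_mul,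
      ← smul_mul_assoc, ← mul_smul_comm, ← Matrix.diagonal_smul]
    congr 3
    ext i
    simp


lemma core0 (f : ℝ → ℝ) (hm : OperatorMonotone f) {m : ℕ} (O : Matrix (Fin m) (Fin m) ℝ)
    (a b w : Fin m → ℝ) (ha : ∀ i, 0 ≤ a i) (hb : ∀ i, 0 ≤ b i) (hO : O * O.transpose = 1)
    (hBA : O * Matrix.diagonal b * O.transpose - Matrix.diagonal a = Matrix.vecMulVec w w)
    (x : Fin m → ℝ) :
    ∑ i, f (a i) * x i ^ 2 ≤ ∑ j, f (b j) * (O.transpose.mulVec x j) ^ 2 := by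
  set Oc : Matrix (Fin m) (Fin m) ℂ := O.map Complex.ofRealHom with hOc
  have hstar : star Oc = O.transpose.map Complex.ofRealHom := by
    ext i j
    simp [hOc, Matrix.star_apply]
  have hOO : Oc * star Oc = 1 := by
    rw [hstar, hOc, ← Matrix.map_mul, hO]
    simp
  have hdiag : ∀ d : Fin m → ℝ, Matrix.diagonal (fun i => (d i : ℂ)) =
      (Matrix.diagonal d).map Complex.ofRealHom := by
    intro d
    rw [Matrix.diagonal_map (by simp)]
    rfl
  have hdp : ∀ d : Fin m → ℝ, (∀ i, 0 ≤ d i) →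
      (Matrix.diagonal (fun i => (d i : ℂ))).PosSemidef := by
    intro d hd
    apply Matrix.PosSemidef.diagonal
    intro i
    simpa using hd i
  have h1 := hm m (Matrix.diagonal (fun i => (a i : ℂ)))
    (Oc * Matrix.diagonal (fun i => (b i : ℂ)) * star Oc) (hdp a ha)
    ((hdp b hb).mul_mul_conjTranspose_same Oc) (by
      rw [hstar, hdiag, hdiag, ← Matrix.map_mul, ← Matrix.map_mul, ← Matrix.map_sub Complex.ofRealHom (by simp), hBA]
      have : (Matrix.vecMulVec w w).map Complex.ofRealHom =
        Matrix.vecMulVec (fun i => (w i : ℂ)) (star (fun i => (w i : ℂ))) := by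
        ext i j
        simp [Matrix.vecMulVec_apply]
      rw [this]
      exact Matrix.posSemidef_vecMulVec_self_star _)
  rw [cfc_conj_diag Oc hOO] at h1
  have h2 := cfc_conj_diag (1 : Matrix (Fin m) (Fin m) ℂ) (by simp) a f
  simp only [one_mul, star_one, mul_one] at h2
  rw [h2] at h1
  rw [hstar, hdiag, hdiag, ← Matrix.map_mul, ← Matrix.map_mul, ← Matrix.map_sub Complex.ofRealHom (by simp)] at h1
  have h3 := h1.dotProduct_mulVec_nonneg (fun i => (x i : ℂ))
  set M := O * Matrix.diagonal (fun i => f (b i)) * O.transpose -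
    Matrix.diagonal (fun i => f (a i)) with hM
  have h4 : (star (fun i => (x i : ℂ)) ⬝ᵥ (M.map Complex.ofRealHom).mulVec (fun i => (x i : ℂ)))
      = ((x ⬝ᵥ M.mulVec x : ℝ) : ℂ) := by
    simp [dotProduct, Matrix.mulVec]
  rw [h4, Complex.zero_le_real, hM, Matrix.sub_mulVec, dotProduct_sub, ← Matrix.mulVec_mulVec,
    ← Matrix.mulVec_mulVec, Matrix.dotProduct_mulVec, ← Matrix.mulVec_transpose] at h3
  simp only [dotProduct, Matrix.mulVec_diagonal] at h3
  have e1 : ∑ i, f (a i) * x i ^ 2 = ∑ i, x i * (f (a i) * x i) :=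
    Finset.sum_congr rfl fun i _ => by ring
  have e2 : ∑ j, f (b j) * (O.transpose.mulVec x j) ^ 2 =
    ∑ j, (O.transpose.mulVec x j) * (f (b j) * (O.transpose.mulVec x j)) :=
    Finset.sum_congr rfl fun i _ => by ring
  rw [e1, e2]
  linarith

open Polynomial in
lemma core1 (f : ℝ → ℝ) (hm : OperatorMonotone f) {m : ℕ}
    (a b : Fin m → ℝ) (ha : ∀ i, 0 ≤ a i) (hab : ∀ i, a i < b i) (hba : ∀ i j, i < j → b i < a j)
    (V : ℝ[X]) (hV : V.degree < m) :
    0 ≤ ∑ j, f (b j) * (V.eval (b j) ^ 2 /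
        ((∏ k, (b j - a k)) * ∏ l ∈ Finset.univ.erase j, (b j - b l)))
      + ∑ i, f (a i) * (V.eval (a i) ^ 2 /
        ((∏ k, (a i - b k)) * ∏ l ∈ Finset.univ.erase i, (a i - a l))) := by
  classical
  have hne : ∀ i j, b j - a i ≠ 0 := by
    intro i j
    rcases lt_trichotomy i j with h | h | h
    · have := hab i; have := hab j; have := hba i j h; apply ne_of_gt; linarith
    · subst h; have := hab i; apply ne_of_gt; linarith
    · have := hba j i h; apply ne_of_lt; linarith
  have hasm : StrictMono a := fun i j h => (hab i).trans (hba i j h)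
  have hbsm : StrictMono b := fun i j h => (hba i j h).trans (hab j)
  have hane : ∀ i, ∏ l ∈ Finset.univ.erase i, (a i - a l) ≠ 0 := fun i =>
    Finset.prod_ne_zero_iff.2 fun l hl =>
      sub_ne_zero.2 (fun h => (Finset.ne_of_mem_erase hl) (hasm.injective h).symm)
  have hbne : ∀ i, ∏ l ∈ Finset.univ.erase i, (b i - b l) ≠ 0 := fun i =>
    Finset.prod_ne_zero_iff.2 fun l hl =>
      sub_ne_zero.2 (fun h => (Finset.ne_of_mem_erase hl) (hbsm.injective h).symm)
  set w2 : Fin m → ℝ := fun i =>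
    -(∏ k, (a i - b k)) / ∏ l ∈ Finset.univ.erase i, (a i - a l) with hw2
  set z2 : Fin m → ℝ := fun j =>
    (∏ k, (b j - a k)) / ∏ l ∈ Finset.univ.erase j, (b j - b l) with hz2
  have hw2pos : ∀ i, 0 < w2 i := by
    intro i
    rw [hw2]
    simp only
    rw [← Finset.mul_prod_erase _ _ (Finset.mem_univ i), ← neg_mul, mul_div_assoc,
      ← Finset.prod_div_distrib]
    apply mul_pos
    · have := hab i; linarith
    · apply Finset.prod_pos
      intro l hl
      rcases lt_or_gt_of_ne (Finset.ne_of_mem_erase hl) with h | h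
      · apply div_pos
        · have := hba l i h; linarith
        · have := hasm h; linarith
      · apply div_pos_of_neg_of_neg
        · have := hasm h; have := hab l; linarith
        · have := hasm h; linarith
  have hz2pos : ∀ i, 0 < z2 i := by
    intro i
    rw [hz2]
    simp only
    rw [← Finset.mul_prod_erase _ _ (Finset.mem_univ i), mul_div_assoc,
      ← Finset.prod_div_distrib]
    apply mul_pos
    · have := hab i; linarith
    · apply Finset.prod_pos
      intro l hl
      rcases lt_or_gt_of_ne (Finset.ne_of_mem_erase hl) with h | h
      · apply div_pos
        · have := hasm h; have := hab i; linarith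
        · have := hbsm h; linarith
      · apply div_pos_of_neg_of_neg
        · have := hba i l h; linarith
        · have := hbsm h; linarith
  set w : Fin m → ℝ := fun i => √(w2 i) with hw
  set z : Fin m → ℝ := fun i => √(z2 i) with hz
  have hww : ∀ i, w i * w i = w2 i := fun i => Real.mul_self_sqrt (hw2pos i).le
  have hzz : ∀ i, z i * z i = z2 i := fun i => Real.mul_self_sqrt (hz2pos i).le
  have hwpos : ∀ i, 0 < w i := fun i => Real.sqrt_pos.2 (hw2pos i)
  have hzpos : ∀ i, 0 < z i := fun i => Real.sqrt_pos.2 (hz2pos i)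
  set R : Fin m → ℝ[X] := fun i => Lagrange.nodal (Finset.univ.erase i) a with hR
  have hRe : ∀ i j, z2 j = (b j - a i) * ((R i).eval (b j) /
      ∏ l ∈ Finset.univ.erase j, (b j - b l)) := by
    intro i j
    rw [hR, hz2]
    simp only
    rw [Lagrange.eval_nodal, ← Finset.mul_prod_erase _ _ (Finset.mem_univ i), mul_div_assoc]
  have hRdeg : ∀ i, (R i).degree = ((m - 1 : ℕ) : WithBot ℕ) := by
    intro i
    rw [hR]
    simp only
    rw [Lagrange.degree_nodal, Finset.card_erase_of_mem (Finset.mem_univ i), Finset.card_fin]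
  have hmpos : ∀ _ : Fin m, 0 < m := fun i => i.pos
  have hRdeg' : ∀ i, (R i).degree < (Finset.univ : Finset (Fin m)).card := by
    intro i
    rw [hRdeg, Finset.card_fin]
    have := hmpos i
    exact_mod_cast Nat.sub_lt this one_pos
  -- sums
  have S1 : ∀ i, ∑ j, z2 j / (b j - a i) = 1 := by
    intro i
    have h1 := Lagrange.coeff_eq_sum (s := Finset.univ) (v := b) hbsm.injective.injOn (hRdeg' i)
    have h2 : (R i).coeff ((Finset.univ : Finset (Fin m)).card - 1) = 1 := by
      have h3 : (R i).Monic := Lagrange.nodal_monic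
      have h4 : (R i).natDegree = m - 1 := natDegree_eq_of_degree_eq_some (hRdeg i)
      rw [Finset.card_fin, ← h4]
      exact h3
    rw [← h2, h1]
    refine Finset.sum_congr rfl fun j _ => ?_
    rw [hRe i j, mul_div_cancel_left₀ _ (hne i j)]
  have S2 : ∀ i k, i ≠ k → ∑ j, z2 j / ((b j - a i) * (b j - a k)) = 0 := by
    intro i k hik
    set R2 : ℝ[X] := Lagrange.nodal ((Finset.univ.erase i).erase k) a with hR2
    have hkm : k ∈ Finset.univ.erase i := Finset.mem_erase.2 ⟨hik.symm, Finset.mem_univ _⟩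
    have hm2 : 1 < m := by
      have := (Finset.one_lt_card (s := (Finset.univ : Finset (Fin m)))).2
        ⟨i, Finset.mem_univ _, k, Finset.mem_univ _, hik⟩
      simpa using this
    have hd : R2.degree = ((m - 1 - 1 : ℕ) : WithBot ℕ) := by
      rw [hR2, Lagrange.degree_nodal, Finset.card_erase_of_mem hkm,
        Finset.card_erase_of_mem (Finset.mem_univ i), Finset.card_fin]
    have h1 := Lagrange.coeff_eq_sum (s := Finset.univ) (v := b) hbsm.injective.injOn (P := R2) (by
      rw [hd, Finset.card_fin]; exact_mod_cast (by omega : m - 1 - 1 < m))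
    have h2 : R2.coeff ((Finset.univ : Finset (Fin m)).card - 1) = 0 := by
      apply coeff_eq_zero_of_degree_lt
      rw [hd, Finset.card_fin]
      exact_mod_cast (by omega : m - 1 - 1 < m - 1)
    rw [← h2, h1]
    refine Finset.sum_congr rfl fun j _ => ?_
    rw [hRe i j, mul_div_mul_left _ _ (hne i j), hR, hR2]
    simp only
    rw [Lagrange.nodal_eq_mul_nodal_erase hkm, eval_mul, eval_sub, eval_X, eval_C, mul_div_assoc,
      mul_div_cancel_left₀ _ (hne k j)]
  have S3 : ∀ i, w2 i * ∑ j, z2 j / ((b j - a i) * (b j - a i)) = 1 := by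
    intro i
    have h1 := Lagrange.eval_interpolate_not_at_node (s := Finset.univ) (v := b) (x := a i)
      (fun j => (R i).eval (b j)) (fun j _ h => hne i j (by rw [h]; ring))
    rw [← Lagrange.eq_interpolate hbsm.injective.injOn (hRdeg' i)] at h1
    have h2 : ∑ j, z2 j / ((b j - a i) * (b j - a i)) =
        - ∑ j, Lagrange.nodalWeight Finset.univ b j * (a i - b j)⁻¹ * (R i).eval (b j) := by
      rw [← Finset.sum_neg_distrib]
      refine Finset.sum_congr rfl fun j _ => ?_
      rw [hRe i j, mul_div_mul_left _ _ (hne i j), Lagrange.nodalWeight, Finset.prod_inv_distrib,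
        ← neg_sub (b j) (a i)]
      have := hne i j
      have := hbne j
      field_simp
    rw [h2, hw2]
    simp only
    have h3 : (R i).eval (a i) = ∏ l ∈ Finset.univ.erase i, (a i - a l) := Lagrange.eval_nodal
    rw [h3, Lagrange.eval_nodal] at h1
    have := hane i
    rw [neg_div, neg_mul_neg, div_mul_eq_mul_div, ← h1, div_self this]
  have S4 : ∀ j, ∑ i, V.eval (a i) / ((∏ l ∈ Finset.univ.erase i, (a i - a l)) * (b j - a i)) =
      V.eval (b j) / ∏ k, (b j - a k) := by
    intro j
    have h1 := Lagrange.eval_interpolate_not_at_node (s := Finset.univ) (v := a) (x := b j)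
      (fun i => V.eval (a i)) (fun i _ h => hne i j (by rw [h]; ring))
    rw [← Lagrange.eq_interpolate hasm.injective.injOn (by simpa using hV), Lagrange.eval_nodal] at h1
    rw [h1, mul_div_cancel_left₀ _ (Finset.prod_ne_zero_iff.2 fun k _ => hne k j)]
    refine Finset.sum_congr rfl fun i _ => ?_
    rw [Lagrange.nodalWeight, Finset.prod_inv_distrib]
    have := hne i j
    have := hane i
    field_simp
  set O : Matrix (Fin m) (Fin m) ℝ := Matrix.of fun i j => w i * z j / (b j - a i) with hOdef
  have hO : O * O.transpose = 1 := by
    ext i k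
    rw [Matrix.mul_apply]
    have e : ∑ j, O i j * O.transpose j k =
        w i * w k * ∑ j, z2 j / ((b j - a i) * (b j - a k)) := by
      rw [Finset.mul_sum]
      refine Finset.sum_congr rfl fun j _ => ?_
      rw [← hzz]
      simp only [hOdef, Matrix.transpose_apply, Matrix.of_apply]
      have := hne i j
      have := hne k j
      field_simp
    rw [e]
    by_cases hik : i = k
    · subst hik
      rw [hww, S3, Matrix.one_apply_eq]
    · rw [S2 i k hik, mul_zero, Matrix.one_apply_ne hik]
  have hBA : O * Matrix.diagonal b * O.transpose - Matrix.diagonal a = Matrix.vecMulVec w w := by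
    have e1 : O * Matrix.diagonal b = Matrix.diagonal a * O + Matrix.vecMulVec w z := by
      ext i j
      rw [Matrix.mul_diagonal, Matrix.add_apply, Matrix.diagonal_mul, Matrix.vecMulVec_apply]
      simp only [hOdef, Matrix.of_apply]
      have := hne i j
      field_simp
      ring
    rw [e1, add_mul, mul_assoc, hO, mul_one, add_sub_cancel_left, Matrix.vecMulVec_mul]
    congr 1
    ext i
    rw [Matrix.vecMul_transpose, Matrix.mulVec, dotProduct]
    have := S1 i
    calc ∑ j, O i j * z j = w i * ∑ j, z2 j / (b j - a i) := by
          rw [Finset.mul_sum]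
          refine Finset.sum_congr rfl fun j _ => ?_
          rw [← hzz]
          simp only [hOdef, Matrix.of_apply]
          ring
      _ = w i := by rw [this, mul_one]
  have hb : ∀ i, 0 ≤ b i := fun i => (ha i).trans (hab i).le
  have key := core0 f hm O a b w ha hb hO hBA
    (fun i => V.eval (a i) / (w i * ∏ l ∈ Finset.univ.erase i, (a i - a l)))
  have k1 : ∑ i, f (a i) * (V.eval (a i) ^ 2 /
        ((∏ k, (a i - b k)) * ∏ l ∈ Finset.univ.erase i, (a i - a l))) =
      - ∑ i, f (a i) * (V.eval (a i) / (w i * ∏ l ∈ Finset.univ.erase i, (a i - a l))) ^ 2 := by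
    rw [← Finset.sum_neg_distrib]
    refine Finset.sum_congr rfl fun i _ => ?_
    have h5 : ∏ k, (a i - b k) = - (w2 i * ∏ l ∈ Finset.univ.erase i, (a i - a l)) := by
      rw [hw2]
      simp only
      rw [div_mul_cancel₀ _ (hane i), neg_neg]
    have := hane i
    have := (hwpos i).ne'
    rw [h5, ← hww]
    field_simp
  have k2 : ∀ j, O.transpose.mulVec
      (fun i => V.eval (a i) / (w i * ∏ l ∈ Finset.univ.erase i, (a i - a l))) j =
      z j * (V.eval (b j) / ∏ k, (b j - a k)) := by
    intro j
    rw [← S4, Finset.mul_sum, Matrix.mulVec, dotProduct]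
    refine Finset.sum_congr rfl fun i _ => ?_
    simp only [hOdef, Matrix.transpose_apply, Matrix.of_apply]
    have := hne i j
    have := hane i
    have := (hwpos i).ne'
    field_simp
  have k3 : ∑ j, f (b j) * (V.eval (b j) ^ 2 /
        ((∏ k, (b j - a k)) * ∏ l ∈ Finset.univ.erase j, (b j - b l))) =
      ∑ j, f (b j) * (z j * (V.eval (b j) / ∏ k, (b j - a k))) ^ 2 := by
    refine Finset.sum_congr rfl fun j _ => ?_
    have h6 : ∏ k, (b j - a k) ≠ 0 := Finset.prod_ne_zero_iff.2 fun k _ => hne k j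
    have := hbne j
    rw [mul_pow, pow_two (z j), hzz, hz2]
    simp only
    field_simp
  simp only [k2] at key
  rw [k1, k3]
  linarith


open Polynomial in
lemma core2 (f : ℝ → ℝ) (hm : OperatorMonotone f) (S : Finset ℝ) (m : ℕ) (hc : S.card = 2 * m)
    (hS : ∀ y ∈ S, 0 ≤ y) (V : ℝ[X]) (hV : V.degree < m) :
    0 ≤ ∑ y ∈ S, f y * (V.eval y ^ 2 / ∏ z ∈ S.erase y, (y - z)) := by
  classical
  set e := S.orderEmbOfFin hc with he
  set a : Fin m → ℝ := fun i => e ⟨2 * i.1, by omega⟩ with ha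
  set b : Fin m → ℝ := fun i => e ⟨2 * i.1 + 1, by omega⟩ with hb
  have hem : ∀ k, e k ∈ S := fun k => S.orderEmbOfFin_mem hc k
  have hab : ∀ i, a i < b i := fun i => e.strictMono (by simp [Fin.lt_def])
  have hba : ∀ i j, i < j → b i < a j := fun i j h => e.strictMono (by
    simp only [Fin.lt_def] at h ⊢; omega)
  have hai : Function.Injective a := fun i j h => by
    have := e.injective h
    simp only [Fin.mk.injEq] at this
    exact Fin.ext (by omega)
  have hbi : Function.Injective b := fun i j h => by
    have := e.injective h
    simp only [Fin.mk.injEq] at this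
    exact Fin.ext (by omega)
  have hne : ∀ i j, a i ≠ b j := fun i j h => by
    have := e.injective h
    simp only [Fin.mk.injEq] at this
    omega
  have hSu : S = Finset.univ.image a ∪ Finset.univ.image b := by
    ext y
    simp only [Finset.mem_union, Finset.mem_image, Finset.mem_univ, true_and]
    constructor
    · intro hy
      have : y ∈ Set.range e := by rw [he, S.range_orderEmbOfFin hc]; exact hy
      obtain ⟨k, rfl⟩ := this
      rcases Nat.even_or_odd' k.1 with ⟨r, hr | hr⟩
      · exact Or.inl ⟨⟨r, by omega⟩, congrArg e (Fin.ext (a := ⟨2 * r, by omega⟩) (b := k) hr.symm)⟩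
      · exact Or.inr ⟨⟨r, by omega⟩, congrArg e (Fin.ext (a := ⟨2 * r + 1, by omega⟩) (b := k) hr.symm)⟩
    · rintro (⟨i, rfl⟩ | ⟨i, rfl⟩)
      · exact hem _
      · exact hem _
  have hdis : Disjoint (Finset.univ.image a) (Finset.univ.image b) := by
    rw [Finset.disjoint_left]
    intro y hy hy'
    simp only [Finset.mem_image, Finset.mem_univ, true_and] at hy hy'
    obtain ⟨i, rfl⟩ := hy
    obtain ⟨j, hj⟩ := hy'
    exact hne i j hj.symm
  have pa : ∀ i, ∏ z ∈ S.erase (a i), (a i - z) =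
      (∏ k, (a i - b k)) * ∏ l ∈ Finset.univ.erase i, (a i - a l) := by
    intro i
    have : S.erase (a i) = Finset.univ.image b ∪ (Finset.univ.erase i).image a := by
      rw [hSu, Finset.image_erase hai, Finset.erase_union_distrib, Finset.union_comm,
        Finset.erase_eq_of_notMem (s := Finset.univ.image b)]
      simp only [Finset.mem_image, Finset.mem_univ, true_and, not_exists]
      exact fun j h => hne i j h.symm
    rw [this, Finset.prod_union, Finset.prod_image hbi.injOn, Finset.prod_image hai.injOn]
    exact (hdis.mono_left (Finset.image_subset_image (Finset.erase_subset _ _))).symm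
  have pb : ∀ i, ∏ z ∈ S.erase (b i), (b i - z) =
      (∏ k, (b i - a k)) * ∏ l ∈ Finset.univ.erase i, (b i - b l) := by
    intro i
    have : S.erase (b i) = Finset.univ.image a ∪ (Finset.univ.erase i).image b := by
      rw [hSu, Finset.image_erase hbi, Finset.erase_union_distrib,
        Finset.erase_eq_of_notMem (s := Finset.univ.image a)]
      simp only [Finset.mem_image, Finset.mem_univ, true_and, not_exists]
      exact fun j h => hne j i h
    rw [this, Finset.prod_union, Finset.prod_image hbi.injOn, Finset.prod_image hai.injOn]
    exact (hdis.mono_right (Finset.image_subset_image (Finset.erase_subset _ _)))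
  have key := core1 f hm a b (fun i => hS _ (hem _)) hab hba V hV
  have : ∑ y ∈ S, f y * (V.eval y ^ 2 / ∏ z ∈ S.erase y, (y - z)) =
      ∑ y ∈ Finset.univ.image a ∪ Finset.univ.image b,
        f y * (V.eval y ^ 2 / ∏ z ∈ S.erase y, (y - z)) := by rw [← hSu]
  rw [this, Finset.sum_union hdis, Finset.sum_image hai.injOn, Finset.sum_image hbi.injOn, add_comm]
  simp only [pa, pb]
  exact key

open Polynomial in
lemma growth (f : ℝ → ℝ) (hnn : ∀ x : ℝ, 0 ≤ x → 0 ≤ f x) (hm : OperatorMonotone f) (R : ℝ)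
    (hR : 1 < R) : f R ≤ 2 * R * f 1 := by
  have hne1 : (0:ℝ) ∉ ({1, R, 2 * R} : Finset ℝ) := by
    simp only [Finset.mem_insert, Finset.mem_singleton]; push Not
    refine ⟨by norm_num, by linarith, by linarith⟩
  have hne2 : (1:ℝ) ∉ ({R, 2 * R} : Finset ℝ) := by
    simp only [Finset.mem_insert, Finset.mem_singleton]; push Not
    refine ⟨by linarith, by linarith⟩
  have hne3 : R ∉ ({2 * R} : Finset ℝ) := by
    simp only [Finset.mem_singleton]; linarith
  have h := core2 f hm {0, 1, R, 2 * R} 2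
    (by rw [Finset.card_insert_of_notMem hne1, Finset.card_insert_of_notMem hne2,
      Finset.card_insert_of_notMem hne3, Finset.card_singleton])
    (by
      intro y hy
      simp only [Finset.mem_insert, Finset.mem_singleton] at hy
      rcases hy with h | h | h | h <;> linarith)
    (X - C (2 * R)) (by rw [degree_X_sub_C]; norm_num)
  rw [Finset.sum_insert hne1, Finset.sum_insert hne2, Finset.sum_insert hne3,
    Finset.sum_singleton] at h
  have e0 : ({0, 1, R, 2 * R} : Finset ℝ).erase 0 = {1, R, 2 * R} := Finset.erase_insert hne1
  have e1 : ({0, 1, R, 2 * R} : Finset ℝ).erase 1 = {0, R, 2 * R} := by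
    rw [Finset.insert_comm, Finset.erase_insert]
    simp only [Finset.mem_insert, Finset.mem_singleton]; push Not
    refine ⟨by norm_num, by linarith, by linarith⟩
  have e2 : ({0, 1, R, 2 * R} : Finset ℝ).erase R = {0, 1, 2 * R} := by
    rw [Finset.insert_comm 1, Finset.insert_comm 0, Finset.erase_insert]
    simp only [Finset.mem_insert, Finset.mem_singleton]; push Not
    refine ⟨by linarith, by linarith, by linarith⟩
  rw [e0, e1, e2] at h
  rw [Finset.prod_insert hne2, Finset.prod_insert hne3, Finset.prod_singleton,
    Finset.prod_insert (by simp only [Finset.mem_insert, Finset.mem_singleton]; push Not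
                           exact ⟨by linarith, by linarith⟩), Finset.prod_insert hne3,
    Finset.prod_singleton,
    Finset.prod_insert (by simp only [Finset.mem_insert, Finset.mem_singleton]; push Not
                           exact ⟨by linarith, by linarith⟩),
    Finset.prod_insert (by simp only [Finset.mem_singleton]; linarith),
    Finset.prod_singleton] at h
  simp only [eval_sub, eval_X, eval_C, sub_self] at h
  have hR1 : 0 < R - 1 := by linarith
  have hR2 : 0 < 2 * R - 1 := by linarith
  have hR0 : 0 < R := by linarith
  have t0 : f 0 * ((0 - 2 * R) ^ 2 / ((0 - 1) * ((0 - R) * (0 - 2 * R)))) = - (2 * f 0) := by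
    have := hR0.ne'
    simp only [zero_sub]
    field_simp
  have t1 : f 1 * ((1 - 2 * R) ^ 2 / ((1 - 0) * ((1 - R) * (1 - 2 * R)))) =
      (2 * R - 1) * f 1 / (R - 1) := by
    have : 1 - R ≠ 0 := by linarith
    have : 1 - 2 * R ≠ 0 := by linarith
    have : R - 1 ≠ 0 := by linarith
    field_simp
    ring
  have t2 : f R * ((R - 2 * R) ^ 2 / ((R - 0) * ((R - 1) * (R - 2 * R)))) = - f R / (R - 1) := by
    have : R - 2 * R = - R := by ring
    rw [this, sub_zero]
    have : R - 1 ≠ 0 := by linarith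
    have := hR0.ne'
    field_simp
  rw [t0, t1, t2] at h
  have h0 := hnn 0 le_rfl
  have h1 := hnn 1 zero_le_one
  have h3 : 0 ≤ ((2 * R - 1) * f 1 - f R) / (R - 1) := by
    rw [sub_div]
    have : f R / (R - 1) = - (- f R / (R - 1)) := by ring
    rw [this]
    simp at h
    linarith
  rw [le_div_iff₀ hR1] at h3
  linarith

open Polynomial Filter Topology in
lemma core3 (f : ℝ → ℝ) (hnn : ∀ x : ℝ, 0 ≤ x → 0 ≤ f x) (hm : OperatorMonotone f)
    (S : Finset ℝ) (m : ℕ) (hc : S.card = 2 * m)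
    (hS : ∀ y ∈ S, 0 < y) (U : ℝ[X]) (hU : U.degree < m) :
    ∑ y ∈ S, f y * (U.eval y ^ 2 / (y * ∏ z ∈ S.erase y, (y - z))) ≤ 0 := by
  classical
  -- inequality for finite R
  have hfin : ∀ᶠ R : ℝ in atTop, 0 ≤ (∑ y ∈ S, f y * (U.eval y ^ 2 / (y * ∏ z ∈ S.erase y, (y - z)))
      * (R / (y - R))) + 2 * f 1 * ((X * U ^ 2).eval R / (Lagrange.nodal S id).eval R) := by
    have h1 : ∀ᶠ R : ℝ in atTop, ∀ y ∈ S, y < R := by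
      rw [eventually_all_finset]
      exact fun y _ => eventually_gt_atTop y
    filter_upwards [h1, eventually_gt_atTop 1] with R hR hR1
    have h0S : (0:ℝ) ∉ S := fun h => (hS 0 h).ne' rfl
    have hRS : R ∉ insert 0 S := by
      rw [Finset.mem_insert]; rintro (h | h)
      · linarith
      · exact (hR R h).ne rfl
    have hRS' : R ∉ S := fun h => hRS (Finset.mem_insert_of_mem h)
    have key := core2 f hm (insert R (insert 0 S)) (m + 1)
      (by rw [Finset.card_insert_of_notMem hRS, Finset.card_insert_of_notMem h0S, hc]; ring)
      (by
        intro y hy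
        simp only [Finset.mem_insert] at hy
        rcases hy with h | h | h
        · linarith
        · exact h.ge
        · exact (hS y h).le) U (hU.trans (by exact_mod_cast Nat.lt_succ_self m))
    rw [Finset.sum_insert hRS, Finset.sum_insert h0S, Finset.erase_insert hRS,
      Finset.insert_comm, Finset.erase_insert (by
        rw [Finset.mem_insert]; rintro (h | h)
        · linarith
        · exact h0S h), Finset.prod_insert h0S, Finset.prod_insert hRS'] at key
    have hRp : 0 < R := by linarith
    have hPR : 0 < ∏ z ∈ S, (R - z) := Finset.prod_pos fun z hz => by linarith [hR z hz]
    have hP0 : 0 < ∏ z ∈ S, (0 - z) := by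
      have : ∏ z ∈ S, (0 - z) = ∏ z ∈ S, z := by
        simp only [zero_sub]
        rw [Finset.prod_neg, hc, pow_mul]; simp
      rw [this]
      exact Finset.prod_pos hS
    have t0 : f 0 * (U.eval 0 ^ 2 / ((0 - R) * ∏ z ∈ S, (0 - z))) ≤ 0 := by
      apply mul_nonpos_of_nonneg_of_nonpos (hnn 0 le_rfl)
      apply div_nonpos_of_nonneg_of_nonpos (sq_nonneg _)
      apply mul_nonpos_of_nonpos_of_nonneg <;> linarith
    have tR : R * (f R * (U.eval R ^ 2 / ((R - 0) * ∏ z ∈ S, (R - z)))) ≤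
        2 * f 1 * ((X * U ^ 2).eval R / (Lagrange.nodal S id).eval R) := by
      rw [Lagrange.eval_nodal]
      simp only [id, eval_mul, eval_X, eval_pow]
      have h2 : R * (f R * (U.eval R ^ 2 / ((R - 0) * ∏ z ∈ S, (R - z)))) =
          f R * (U.eval R ^ 2 / ∏ z ∈ S, (R - z)) := by
        have := hPR.ne'
        rw [sub_zero]
        field_simp
      rw [h2]
      calc f R * (U.eval R ^ 2 / ∏ z ∈ S, (R - z)) ≤
          (2 * R * f 1) * (U.eval R ^ 2 / ∏ z ∈ S, (R - z)) := by
            gcongr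
            exact growth f hnn hm R hR1
        _ = _ := by ring
    have tS : R * ∑ y ∈ S, f y * (U.eval y ^ 2 / ∏ z ∈ (insert 0 (insert R S)).erase y, (y - z)) =
        ∑ y ∈ S, f y * (U.eval y ^ 2 / (y * ∏ z ∈ S.erase y, (y - z))) * (R / (y - R)) := by
      rw [Finset.mul_sum]
      refine Finset.sum_congr rfl fun y hy => ?_
      have hy0 : y ≠ 0 := (hS y hy).ne'
      have hyR : y ≠ R := (hR y hy).ne
      rw [Finset.erase_insert_of_ne hy0.symm, Finset.erase_insert_of_ne hyR.symm,
        Finset.prod_insert, Finset.prod_insert]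
      · rw [sub_zero]
        have : y - R ≠ 0 := sub_ne_zero.2 hyR
        have : ∏ z ∈ S.erase y, (y - z) ≠ 0 := Finset.prod_ne_zero_iff.2 fun z hz =>
          sub_ne_zero.2 (Finset.ne_of_mem_erase hz).symm
        field_simp
      · exact fun h => hRS' (Finset.mem_of_mem_erase h)
      · rw [Finset.mem_insert]
        rintro (h | h)
        · linarith
        · exact h0S (Finset.mem_of_mem_erase h)
    have h5 := mul_nonneg hRp.le key
    rw [mul_add, mul_add, tS] at h5
    have h6 := mul_nonpos_of_nonneg_of_nonpos hRp.le t0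
    linarith
  have hlim : Tendsto (fun R : ℝ => (∑ y ∈ S, f y * (U.eval y ^ 2 / (y * ∏ z ∈ S.erase y, (y - z)))
      * (R / (y - R))) + 2 * f 1 * ((X * U ^ 2).eval R / (Lagrange.nodal S id).eval R)) atTop
      (𝓝 ((∑ y ∈ S, f y * (U.eval y ^ 2 / (y * ∏ z ∈ S.erase y, (y - z))) * (-1)) +
        2 * f 1 * 0)) := by
    apply Tendsto.add
    · apply tendsto_finsetSum
      intro y _
      apply Tendsto.const_mul
      have h1 : Tendsto (fun R : ℝ => (X : ℝ[X]).eval R / (C y - X : ℝ[X]).eval R) atTop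
          (𝓝 ((X : ℝ[X]).leadingCoeff / (C y - X : ℝ[X]).leadingCoeff)) := by
        apply Polynomial.div_tendsto_atTop_leadingCoeff_div_of_degree_eq
        rw [← neg_sub, degree_neg, degree_X_sub_C, degree_X]
      have h2 : (X : ℝ[X]).leadingCoeff / (C y - X : ℝ[X]).leadingCoeff = -1 := by
        rw [← neg_sub, leadingCoeff_neg, leadingCoeff_X_sub_C, leadingCoeff_X]; norm_num
      rw [h2] at h1
      simpa using h1
    · apply Tendsto.const_mul
      apply Polynomial.div_tendsto_atTop_zero_of_degree_lt
      rw [Lagrange.degree_nodal, hc]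
      by_cases hU0 : U = 0
      · rw [hU0]; simp
        exact WithBot.bot_lt_coe (2 * m)
      · rw [degree_mul, degree_X, degree_pow, degree_eq_natDegree hU0]
        have : U.natDegree < m := (natDegree_lt_iff_degree_lt hU0).2 hU
        rw [nsmul_eq_mul]
        exact_mod_cast (by omega : 1 + 2 * U.natDegree < 2 * m)
  have := ge_of_tendsto hlim hfin
  simp only [mul_neg, mul_one, mul_zero, add_zero, Finset.sum_neg_distrib] at this
  linarith


open Polynomial in
lemma exists_min_nonneg (P : ℝ[X]) (hP : ∀ x, 0 ≤ x → 0 ≤ P.eval x) :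
    ∃ x0, 0 ≤ x0 ∧ ∀ x, 0 ≤ x → P.eval x0 ≤ P.eval x := by
  by_cases hd : 0 < P.degree
  · have ht := Polynomial.abs_tendsto_atTop P hd
    have h1 := (ht.eventually_ge_atTop (P.eval 0))
    rw [Filter.eventually_atTop] at h1
    obtain ⟨R, hR⟩ := h1
    obtain ⟨x0, hx0, hmin⟩ := (isCompact_Icc (a := (0:ℝ)) (b := max R 0)).exists_isMinOn
      ⟨0, by simp⟩ P.continuous.continuousOn
    refine ⟨x0, hx0.1, fun x hx => ?_⟩
    by_cases hxR : x ≤ max R 0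
    · exact hmin ⟨hx, hxR⟩
    · push Not at hxR
      have h2 := hR x ((le_max_left _ _).trans hxR.le)
      rw [abs_of_nonneg (hP x hx)] at h2
      exact (hmin (a := 0) (by simp)).trans h2
  · rw [eq_C_of_degree_le_zero (not_lt.1 hd)]
    exact ⟨0, le_rfl, by simp⟩

open Polynomial in
lemma sos (n : ℕ) : ∀ (L : ℝ[X] →ₗ[ℝ] ℝ), (∀ U : ℝ[X], (U ^ 2).natDegree ≤ n → 0 ≤ L (U ^ 2)) →
    (∀ V : ℝ[X], (X * V ^ 2).natDegree ≤ n → 0 ≤ L (X * V ^ 2)) →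
    ∀ P : ℝ[X], P.natDegree ≤ n → (∀ x, 0 ≤ x → 0 ≤ P.eval x) → 0 ≤ L P := by
  induction n using Nat.strong_induction_on with
  | _ n ih =>
  intro L h1 h2 P hPn hP
  have hconst : ∀ c : ℝ, 0 ≤ c → 0 ≤ L (C c) := by
    intro c hc
    have : C c = (C (√c)) ^ 2 := by rw [← C_pow, Real.sq_sqrt hc]
    rw [this]
    apply h1
    rw [← this]; simp
  obtain ⟨x0, hx0, hmin⟩ := exists_min_nonneg P hP
  obtain ⟨r, hr⟩ : X - C x0 ∣ P - C (P.eval x0) := by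
    rw [dvd_iff_isRoot]; simp
  have hPe : P = C (P.eval x0) + (X - C x0) * r := by rw [← hr]; ring
  have hrn : (X - C x0) * r ≠ 0 → r.natDegree + 1 ≤ n := by
    intro h0
    have : ((X - C x0) * r).natDegree ≤ n := by
      rw [← hr, natDegree_sub_C]; exact hPn
    rw [natDegree_mul (left_ne_zero_of_mul h0) (right_ne_zero_of_mul h0), natDegree_X_sub_C] at this
    omega
  have hc0 := hconst _ (hP x0 hx0)
  have hev : ∀ x, 0 ≤ x → 0 ≤ (x - x0) * r.eval x := by
    intro x hx
    have := hmin x hx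
    have e : P.eval x = P.eval x0 + (x - x0) * r.eval x := by
      conv_lhs => rw [hPe]
      simp
    linarith
  suffices h : 0 ≤ L ((X - C x0) * r) by
    rw [hPe, map_add]; linarith
  by_cases h0 : (X - C x0) * r = 0
  · rw [h0]; simp
  have hn1 := hrn h0
  rcases hx0.eq_or_lt with rfl | hpos
  · simp only [map_zero, sub_zero] at *
    have key := ih (n - 1) (by omega) (L ∘ₗ LinearMap.mulLeft ℝ X) ?_ ?_ r (by omega) ?_
    · simpa using key
    · intro U hU
      simp only [LinearMap.comp_apply, LinearMap.mulLeft_apply]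
      apply h2
      refine natDegree_mul_le.trans ?_
      rw [natDegree_X]; omega
    · intro V hV
      simp only [LinearMap.comp_apply, LinearMap.mulLeft_apply]
      have : X * (X * V ^ 2) = (X * V) ^ 2 := by ring
      rw [this]
      apply h1
      rw [← this]
      refine natDegree_mul_le.trans ?_
      rw [natDegree_X]; omega
    · have hlim : Filter.Tendsto (fun x => r.eval x) (nhdsWithin 0 (Set.Ioi 0)) (nhds (r.eval 0)) :=
        (r.continuous.tendsto 0).mono_left nhdsWithin_le_nhds
      have hp : ∀ x : ℝ, 0 < x → 0 ≤ r.eval x := fun x hx =>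
        nonneg_of_mul_nonneg_right (hev x hx.le) hx
      intro x hx
      rcases hx.eq_or_lt with rfl | hx
      · refine ge_of_tendsto hlim ?_
        filter_upwards [self_mem_nhdsWithin] with x hx using hp x hx
      · exact hp x hx
  · have hrl : ∀ x, x0 < x → 0 ≤ r.eval x := fun x hx =>
      nonneg_of_mul_nonneg_right (hev x (by linarith)) (by linarith)
    have hrs : ∀ x, 0 ≤ x → x < x0 → r.eval x ≤ 0 := fun x h0 hx => by
      have := hev x h0
      nlinarith
    have hroot : r.eval x0 = 0 := by
      apply le_antisymm
      · have hlim : Filter.Tendsto (fun x => r.eval x) (nhdsWithin x0 (Set.Iio x0))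
          (nhds (r.eval x0)) := (r.continuous.tendsto x0).mono_left nhdsWithin_le_nhds
        refine le_of_tendsto hlim ?_
        filter_upwards [self_mem_nhdsWithin, mem_nhdsWithin_of_mem_nhds (lt_mem_nhds hpos)]
          with x hx hx'
        exact hrs x hx'.le hx
      · have hlim : Filter.Tendsto (fun x => r.eval x) (nhdsWithin x0 (Set.Ioi x0))
          (nhds (r.eval x0)) := (r.continuous.tendsto x0).mono_left nhdsWithin_le_nhds
        refine ge_of_tendsto hlim ?_
        filter_upwards [self_mem_nhdsWithin] with x hx
        exact hrl x hx
    obtain ⟨q, hq⟩ : X - C x0 ∣ r := by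
      rw [dvd_iff_isRoot]; exact hroot
    have hrne := right_ne_zero_of_mul h0
    have hqne : q ≠ 0 := by rintro rfl; simp at hq; exact hrne hq
    have hqn : q.natDegree + 2 ≤ n := by
      rw [hq, natDegree_mul (X_sub_C_ne_zero _) hqne, natDegree_X_sub_C] at hn1
      omega
    have hd2 : ((X - C x0) ^ 2).natDegree ≤ 2 := by
      rw [natDegree_pow, natDegree_X_sub_C]
    have hqp : ∀ x, 0 ≤ x → x ≠ x0 → 0 ≤ q.eval x := by
      intro x hx hne
      have h3 := hev x hx
      rw [hq, eval_mul] at h3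
      simp only [eval_sub, eval_X, eval_C] at h3
      have h4 : 0 < (x - x0) ^ 2 := by
        have := sub_ne_zero.2 hne
        positivity
      refine nonneg_of_mul_nonneg_right (a := (x - x0) ^ 2) ?_ h4
      nlinarith
    have key := ih (n - 2) (by omega) (L ∘ₗ LinearMap.mulLeft ℝ ((X - C x0) ^ 2)) ?_ ?_ q
      (by omega) ?_
    · simp only [LinearMap.comp_apply, LinearMap.mulLeft_apply] at key
      rw [hq]
      convert key using 2
      ring
    · intro U hU
      simp only [LinearMap.comp_apply, LinearMap.mulLeft_apply]
      have : (X - C x0) ^ 2 * U ^ 2 = ((X - C x0) * U) ^ 2 := by ring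
      rw [this]
      apply h1
      rw [← this]
      refine natDegree_mul_le.trans ?_
      omega
    · intro V hV
      simp only [LinearMap.comp_apply, LinearMap.mulLeft_apply]
      have : (X - C x0) ^ 2 * (X * V ^ 2) = X * ((X - C x0) * V) ^ 2 := by ring
      rw [this]
      apply h2
      rw [← this]
      refine natDegree_mul_le.trans ?_
      omega
    · intro x hx
      by_cases hne : x = x0
      · subst hne
        have hlim : Filter.Tendsto (fun y => q.eval y) (nhdsWithin x (Set.Ioi x))
          (nhds (q.eval x)) := (q.continuous.tendsto x).mono_left nhdsWithin_le_nhds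
        refine ge_of_tendsto hlim ?_
        filter_upwards [self_mem_nhdsWithin] with y hy
        exact hqp y (hx.trans (le_of_lt hy)) (ne_of_gt hy)
      · exact hqp x hx hne


open Polynomial in
lemma pos_even (f : ℝ → ℝ) (hnn : ∀ x : ℝ, 0 ≤ x → 0 ≤ f x) (hm : OperatorMonotone f)
    (S : Finset ℝ) (m : ℕ) (hc : S.card = 2 * m) (hS : ∀ y ∈ S, 0 < y) (c : ℝ → ℝ)
    (hpos : ∀ t ∈ Set.Icc (0:ℝ) 1, 0 ≤ ∑ y ∈ S, c y * whm t y) :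
    0 ≤ ∑ y ∈ S, c y * f y := by
  classical
  rcases Nat.eq_zero_or_pos m with rfl | hmp
  · have : S = ∅ := by rw [← Finset.card_eq_zero]; omega
    rw [this]; simp
  set P : ℝ[X] := ∑ y ∈ S, C (c y * y) * ∏ z ∈ S.erase y, (X + C z) with hPdef
  set L : ℝ[X] →ₗ[ℝ] ℝ := ∑ y ∈ S, (- (f y / (y * ∏ z ∈ S.erase y, (y - z)))) • leval (-y) with hL
  have hLa : ∀ q, L q = - ∑ y ∈ S, f y * (q.eval (-y) / (y * ∏ z ∈ S.erase y, (y - z))) := by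
    intro q
    rw [hL, LinearMap.sum_apply, ← Finset.sum_neg_distrib]
    refine Finset.sum_congr rfl fun y _ => ?_
    simp only [LinearMap.smul_apply, leval_apply, smul_eq_mul]
    ring
  have hprod : ∀ y ∈ S, ∏ z ∈ S.erase y, (y - z) ≠ 0 := fun y hy =>
    Finset.prod_ne_zero_iff.2 fun z hz => sub_ne_zero.2 (Finset.ne_of_mem_erase hz).symm
  have hLP : L P = ∑ y ∈ S, c y * f y := by
    rw [hLa, ← Finset.sum_neg_distrib]
    refine Finset.sum_congr rfl fun y hy => ?_
    have h1 : P.eval (-y) = c y * y * ∏ z ∈ S.erase y, (-y + z) := by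
      rw [hPdef, eval_finsetSum, Finset.sum_eq_single_of_mem y hy]
      · rw [eval_mul, eval_C, eval_prod]; simp
      · intro w hw hwy
        rw [eval_mul, eval_prod, Finset.prod_eq_zero (i := y), mul_zero]
        · exact Finset.mem_erase.2 ⟨hwy.symm, hy⟩
        · simp
    have h2 : ∏ z ∈ S.erase y, (-y + z) = - ∏ z ∈ S.erase y, (y - z) := by
      have : ∀ z ∈ S.erase y, (-y + z) = -(y - z) := fun z _ => by ring
      rw [Finset.prod_congr rfl this, Finset.prod_neg, Finset.card_erase_of_mem hy, hc,
        Odd.neg_one_pow ⟨m - 1, by omega⟩]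
      ring
    rw [h1, h2]
    have := hprod y hy
    have := (hS y hy).ne'
    field_simp
  rw [← hLP]
  refine sos (2 * m - 1) L ?_ ?_ P ?_ ?_
  · intro U hU
    rw [hLa]
    have hd : (U.comp (-X)).degree < m := by
      refine degree_le_natDegree.trans_lt ?_
      rw [natDegree_comp, natDegree_neg, natDegree_X, mul_one]
      rw [natDegree_pow] at hU
      exact_mod_cast (by omega : U.natDegree < m)
    have := core3 f hnn hm S m hc hS _ hd
    simp only [eval_comp, eval_neg, eval_X] at this
    simp only [eval_pow]
    linarith
  · intro V hV
    by_cases hV0 : V = 0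
    · rw [hV0]; simp
    rw [hLa]
    have hd : (V.comp (-X)).degree < m := by
      refine degree_le_natDegree.trans_lt ?_
      rw [natDegree_comp, natDegree_neg, natDegree_X, mul_one]
      rw [natDegree_mul X_ne_zero (pow_ne_zero _ hV0), natDegree_X, natDegree_pow] at hV
      exact_mod_cast (by omega : V.natDegree < m)
    have := core2 f hm S m hc (fun y hy => (hS y hy).le) _ hd
    simp only [eval_comp, eval_neg, eval_X] at this
    rw [← Finset.sum_neg_distrib]
    convert this using 2 with y hy
    have h0 := (hS y hy).ne'
    have := hprod y hy
    simp only [eval_mul, eval_X, eval_pow]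
    field_simp
  · rw [hPdef]
    refine natDegree_sum_le_of_forall_le _ _ fun y hy => ?_
    refine (natDegree_C_mul_le _ _).trans ?_
    refine (natDegree_prod_le _ _).trans ?_
    simp only [natDegree_X_add_C, Finset.sum_const, smul_eq_mul, mul_one]
    rw [Finset.card_erase_of_mem hy, hc]
  · intro s hs
    have h1 : (0:ℝ) < 1 + s := by linarith
    have h := hpos (s / (1 + s)) ⟨by positivity, by rw [div_le_one h1]; linarith⟩
    have hprodpos : 0 < ∏ z ∈ S, (s + z) := Finset.prod_pos fun z hz => by
      have := hS z hz
      linarith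
    have e : P.eval s = (∏ z ∈ S, (s + z)) / (1 + s) * ∑ y ∈ S, c y * whm (s / (1 + s)) y := by
      rw [hPdef, eval_finsetSum, Finset.mul_sum]
      refine Finset.sum_congr rfl fun y hy => ?_
      have hy0 := hS y hy
      have hw : whm (s / (1 + s)) y = (1 + s) * y / (s + y) := by
        unfold whm
        rw [if_neg (fun h => hy0.ne' h.2)]
        have : s + y ≠ 0 := by linarith
        have h3 : (1 - s / (1 + s)) * y + s / (1 + s) = (s + y) / (1 + s) := by
          field_simp; ring
        rw [h3]
        field_simp
      rw [hw, eval_mul, eval_C, eval_prod, ← Finset.mul_prod_erase S _ hy]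
      simp only [eval_add, eval_X, eval_C]
      have : s + y ≠ 0 := by linarith
      field_simp
    rw [e]
    positivity

lemma pos_gen (f : ℝ → ℝ) (hnn : ∀ x : ℝ, 0 ≤ x → 0 ≤ f x) (hm : OperatorMonotone f)
    (S : Finset ℝ) (hS : ∀ y ∈ S, 0 < y) (c : ℝ → ℝ)
    (hpos : ∀ t ∈ Set.Icc (0:ℝ) 1, 0 ≤ ∑ y ∈ S, c y * whm t y) :
    0 ≤ ∑ y ∈ S, c y * f y := by
  classical
  rcases Nat.even_or_odd' S.card with ⟨m, hc | hc⟩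
  · exact pos_even f hnn hm S m hc hS c hpos
  · obtain ⟨w, hw⟩ : ∃ w, w ∈ Set.Ioi (0:ℝ) \ S :=
      ((Set.Ioi_infinite (0:ℝ)).sdiff S.finite_toSet).nonempty
    have hwS : w ∉ S := hw.2
    have key := pos_even f hnn hm (insert w S) (m + 1)
      (by rw [Finset.card_insert_of_notMem hwS, hc]; ring)
      (by
        intro y hy
        rcases Finset.mem_insert.1 hy with rfl | h
        · exact hw.1
        · exact hS y h) (fun y => if y = w then 0 else c y) ?_
    · rw [Finset.sum_insert hwS] at key
      simp only [if_true, zero_mul, zero_add] at key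
      rw [Finset.sum_congr rfl (g := fun y => c y * f y)] at key
      · exact key
      · intro y hy
        have hne : y ≠ w := fun h => hwS (h ▸ hy)
        simp only [if_neg hne]
    · intro t ht
      rw [Finset.sum_insert hwS]
      simp only [if_true, zero_mul, zero_add]
      rw [Finset.sum_congr rfl (g := fun y => c y * whm t y)]
      · exact hpos t ht
      · intro y hy
        have hne : y ≠ w := fun h => hwS (h ▸ hy)
        simp only [if_neg hne]


lemma whm_denom_pos (t : ℝ) (ht : t ∈ Set.Icc (0:ℝ) 1) (x : ℝ) (hx : 0 < x) :
    0 < (1 - t) * x + t := by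
  rcases ht.1.eq_or_lt with h | h
  · rw [← h]; simpa using hx
  · have := mul_nonneg (sub_nonneg.2 ht.2) hx.le
    linarith

lemma whm_pos_eq (t x : ℝ) (hx : 0 < x) : whm t x = x / ((1 - t) * x + t) :=
  if_neg fun h => hx.ne' h.2

lemma whm_nonneg (t : ℝ) (ht : t ∈ Set.Icc (0:ℝ) 1) (x : ℝ) (hx : 0 ≤ x) : 0 ≤ whm t x := by
  unfold whm
  split_ifs
  · exact zero_le_one
  · exact div_nonneg hx (add_nonneg (mul_nonneg (sub_nonneg.2 ht.2) hx) ht.1)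

lemma whm_le (t : ℝ) (ht : t ∈ Set.Icc (0:ℝ) 1) (x : ℝ) (hx : 0 ≤ x) : whm t x ≤ max 1 x := by
  rcases hx.eq_or_lt with rfl | hx
  · unfold whm
    split_ifs <;> simp
  · rw [whm_pos_eq t x hx, div_le_iff₀ (whm_denom_pos t ht x hx)]
    have h1 : 1 ≤ max 1 x := le_max_left _ _
    have h2 : x ≤ max 1 x := le_max_right _ _
    have h3 := sub_nonneg.2 ht.2
    have h4 := ht.1
    nlinarith [mul_nonneg h3 (mul_nonneg (sub_nonneg.2 h1) hx.le), mul_nonneg h4 (sub_nonneg.2 h2)]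

lemma whm_continuous (x : ℝ) (hx : 0 < x) :
    Continuous (fun t : Set.Icc (0:ℝ) 1 => whm (t : ℝ) x) := by
  have : (fun t : Set.Icc (0:ℝ) 1 => whm (t : ℝ) x) =
      fun t : Set.Icc (0:ℝ) 1 => x / ((1 - (t:ℝ)) * x + t) := funext fun t => whm_pos_eq t x hx
  rw [this]
  refine Continuous.div continuous_const (by fun_prop) fun t => (whm_denom_pos t t.2 x hx).ne'

lemma whm_measurable (x : ℝ) : Measurable (fun t : Set.Icc (0:ℝ) 1 => whm (t : ℝ) x) := by
  have h1 : Measurable (fun t : ℝ => whm t x) := by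
    unfold whm
    refine Measurable.ite ?_ (by fun_prop) (by fun_prop)
    by_cases hx : x = 0
    · simp [hx]
    · simp [hx]
  exact h1.comp measurable_subtype_coe

lemma whm_integrable (μ : Measure (Set.Icc (0:ℝ) 1)) [IsFiniteMeasure μ] (x : ℝ) (hx : 0 ≤ x) :
    Integrable (fun t : Set.Icc (0:ℝ) 1 => whm (t : ℝ) x) μ := by
  refine Integrable.of_bound (whm_measurable x).aestronglyMeasurable (max 1 x) ?_
  refine Filter.Eventually.of_forall fun t => ?_
  rw [Real.norm_of_nonneg (whm_nonneg t t.2 x hx)]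
  exact whm_le t t.2 x hx

lemma pos_fs (f : ℝ → ℝ) (hnn : ∀ x : ℝ, 0 ≤ x → 0 ≤ f x) (hm : OperatorMonotone f)
    (c : {y : ℝ // 0 < y} →₀ ℝ)
    (hpos : ∀ t ∈ Set.Icc (0:ℝ) 1, 0 ≤ c.sum fun y r => r * whm t y) :
    0 ≤ c.sum fun y r => r * f y := by
  classical
  have key := pos_gen f hnn hm (c.support.map (Function.Embedding.subtype _))
    (by
      intro y hy
      simp only [Finset.mem_map, Function.Embedding.subtype_apply] at hy
      obtain ⟨z, _, rfl⟩ := hy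
      exact z.2)
    (fun y => if h : 0 < y then c ⟨y, h⟩ else 0) ?_
  · rw [Finset.sum_map] at key
    refine key.trans_eq ?_
    refine Finset.sum_congr rfl fun y _ => ?_
    simp [y.2]
  · intro t ht
    refine (hpos t ht).trans_eq ?_
    rw [Finset.sum_map]
    refine Finset.sum_congr rfl fun y _ => ?_
    simp [y.2]

open CompactlySupported in
lemma exists_meas (f : ℝ → ℝ) (hnn : ∀ x : ℝ, 0 ≤ x → 0 ≤ f x) (hm : OperatorMonotone f) :
    ∃ μ : Measure (Set.Icc (0:ℝ) 1), IsFiniteMeasure μ ∧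
      ∀ x : ℝ, 0 < x → f x = ∫ t, whm (t : ℝ) x ∂μ := by
  classical
  let w : {y : ℝ // 0 < y} → C_c(Set.Icc (0:ℝ) 1, ℝ) := fun y =>
    { toFun := fun t => whm (t : ℝ) y
      continuous_toFun := whm_continuous y y.2
      hasCompactSupport' := HasCompactSupport.of_compactSpace _ }
  let Φ := Finsupp.linearCombination ℝ w
  let F := Finsupp.linearCombination ℝ (fun y : {y : ℝ // 0 < y} => f y)
  have hΦ : ∀ c t, Φ c t = c.sum fun y r => r * whm (t : ℝ) y := by
    intro c t
    simp only [Φ, Finsupp.linearCombination_apply, Finsupp.sum]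
    rw [CompactlySupportedContinuousMap.coe_sum, Finset.sum_apply]
    rfl
  have hF : ∀ c, F c = c.sum fun y r => r * f y := fun c => by
    simp only [F, Finsupp.linearCombination_apply, smul_eq_mul]
  have hpos : ∀ c, (∀ t, 0 ≤ Φ c t) → 0 ≤ F c := by
    intro c hc
    rw [hF]
    refine pos_fs f hnn hm c fun t ht => ?_
    rw [← hΦ c ⟨t, ht⟩]
    exact hc _
  have hker : F ∈ (LinearMap.ker Φ).dualAnnihilator := by
    rw [Submodule.mem_dualAnnihilator]
    intro c hc
    rw [LinearMap.mem_ker] at hc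
    apply le_antisymm
    · have := hpos (-c) (fun t => by rw [map_neg, hc]; simp)
      rw [map_neg] at this; linarith
    · exact hpos c (fun t => by rw [hc]; simp)
  rw [← LinearMap.range_dualMap_eq_dualAnnihilator_ker] at hker
  obtain ⟨G, hG⟩ := hker
  have hGF : ∀ c, G (Φ c) = F c := fun c => by rw [← hG]; rfl
  let s : PointedCone ℝ C_c(Set.Icc (0:ℝ) 1, ℝ) :=
    { carrier := {g | ∀ t, 0 ≤ g t}
      add_mem' := fun {a b} ha hb t => add_nonneg (ha t) (hb t)
      zero_mem' := fun t => le_rfl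
      smul_mem' := fun c a ha t => mul_nonneg c.2 (ha t) }
  have hn : ∀ x : (G.toPMap (LinearMap.range Φ)).domain, (x : C_c(Set.Icc (0:ℝ) 1, ℝ)) ∈ s →
      0 ≤ G.toPMap (LinearMap.range Φ) x := by
    rintro ⟨x, c, rfl⟩ hx
    change 0 ≤ G (Φ c)
    rw [hGF]
    exact hpos c hx
  have hd : ∀ y, ∃ x : (G.toPMap (LinearMap.range Φ)).domain,
      (x : C_c(Set.Icc (0:ℝ) 1, ℝ)) + y ∈ s := by
    intro y
    obtain ⟨M, hM⟩ := (isCompact_range y.continuous).bddBelow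
    refine ⟨⟨Φ (Finsupp.single ⟨1, one_pos⟩ (-M)), ⟨_, rfl⟩⟩, fun t => ?_⟩
    change 0 ≤ Φ (Finsupp.single ⟨1, one_pos⟩ (-M)) t + y t
    rw [hΦ, Finsupp.sum_single_index (by simp), whm_pos_eq _ _ one_pos]
    have := hM ⟨t, rfl⟩
    simp
    exact this
  obtain ⟨H, hH1, hH2⟩ := riesz_extension s (G.toPMap (LinearMap.range Φ)) hn hd
  let Λ : C_c(Set.Icc (0:ℝ) 1, ℝ) →ₚ[ℝ] ℝ := PositiveLinearMap.mk₀ H (fun g hg => hH2 g hg)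
  refine ⟨RealRMK.rieszMeasure Λ, inferInstance, fun x hx => ?_⟩
  have h1 := RealRMK.integral_rieszMeasure Λ (w ⟨x, hx⟩)
  have h2 : Λ (w ⟨x, hx⟩) = H (w ⟨x, hx⟩) := rfl
  have h3 : Φ (Finsupp.single ⟨x, hx⟩ 1) = w ⟨x, hx⟩ := by
    simp [Φ]
  have h4 : H (w ⟨x, hx⟩) = G (w ⟨x, hx⟩) :=
    hH1 ⟨w ⟨x, hx⟩, ⟨_, h3⟩⟩
  have h5 : G (w ⟨x, hx⟩) = f x := by
    rw [← h3, hGF]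
    simp [F]
  rw [← h5, ← h4, ← h2, ← h1]
  rfl

open Filter Topology in
lemma exists_meas0 (f : ℝ → ℝ) (hc : ContinuousOn f (Set.Ici 0))
    (hnn : ∀ x : ℝ, 0 ≤ x → 0 ≤ f x) (hm : OperatorMonotone f) :
    ∃ μ : Measure (Set.Icc (0:ℝ) 1), IsFiniteMeasure μ ∧
      ∀ x : ℝ, 0 ≤ x → f x = ∫ t, whm (t : ℝ) x ∂μ := by
  obtain ⟨μ, hμ, h⟩ := exists_meas f hnn hm
  refine ⟨μ, hμ, fun x hx => ?_⟩
  rcases hx.eq_or_lt with rfl | hx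
  · have l1 : Tendsto f (𝓝[>] 0) (𝓝 (f 0)) :=
      (hc 0 (by simp)).mono_left (nhdsWithin_mono _ Set.Ioi_subset_Ici_self)
    have l2 : Tendsto (fun x => ∫ t : Set.Icc (0:ℝ) 1, whm (t : ℝ) x ∂μ) (𝓝[>] 0)
        (𝓝 (∫ t : Set.Icc (0:ℝ) 1, whm (t : ℝ) 0 ∂μ)) := by
      refine tendsto_integral_filter_of_dominated_convergence (fun _ => 1)
        (Eventually.of_forall fun x => (whm_measurable x).aestronglyMeasurable) ?_
        (integrable_const _) ?_
      · have : ∀ᶠ x : ℝ in 𝓝[>] 0, x < 1 :=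
          mem_nhdsWithin_of_mem_nhds (gt_mem_nhds zero_lt_one)
        filter_upwards [self_mem_nhdsWithin, this] with x hx hx1
        refine Eventually.of_forall fun t => ?_
        rw [Real.norm_of_nonneg (whm_nonneg t t.2 x (le_of_lt hx))]
        exact (whm_le t t.2 x (le_of_lt hx)).trans (by simp [hx1.le])
      · refine Eventually.of_forall fun t => ?_
        have he : (fun x => x / ((1 - (t:ℝ)) * x + t)) =ᶠ[𝓝[>] 0] fun x => whm (t:ℝ) x := by
          filter_upwards [self_mem_nhdsWithin] with x hx
          exact (whm_pos_eq t x hx).symm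
        refine Tendsto.congr' he ?_
        by_cases ht : (t:ℝ) = 0
        · rw [ht]
          have : whm 0 0 = 1 := by simp [whm]
          rw [this]
          refine Tendsto.congr' ?_ tendsto_const_nhds
          filter_upwards [self_mem_nhdsWithin] with x hx
          have : x ≠ 0 := ne_of_gt hx
          simp [this]
        · have : whm (t:ℝ) 0 = 0 / ((1 - (t:ℝ)) * 0 + t) := by simp [whm, ht]
          rw [this]
          have hca : ContinuousAt (fun x : ℝ => x / ((1 - (t:ℝ)) * x + t)) 0 := by
            refine ContinuousAt.div (by fun_prop) (by fun_prop) (by simpa using ht)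
          exact hca.tendsto.mono_left nhdsWithin_le_nhds
    have l3 : Tendsto f (𝓝[>] 0) (𝓝 (∫ t : Set.Icc (0:ℝ) 1, whm (t : ℝ) 0 ∂μ)) := by
      refine l2.congr' ?_
      filter_upwards [self_mem_nhdsWithin] with x hx
      exact (h x hx).symm
    exact tendsto_nhds_unique l1 l3
  · exact h x hx


lemma opMono_congr (f g : ℝ → ℝ) (hf : OperatorMonotone f) (h : ∀ x, 0 ≤ x → f x = g x) :
    OperatorMonotone g := by
  intro n A B hA hB hAB
  have hspec : ∀ (C : Matrix (Fin n) (Fin n) ℂ), C.PosSemidef → cfc f C = cfc g C := by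
    intro C hC
    refine cfc_congr fun x hx => h x ?_
    rw [hC.1.spectrum_real_eq_range_eigenvalues] at hx
    obtain ⟨i, rfl⟩ := hx
    exact hC.eigenvalues_nonneg i
  rw [← hspec A hA, ← hspec B hB]
  exact hf n A B hA hB hAB


theorem stmt18 (f : ℝ → ℝ) (hc : ContinuousOn f (Set.Ici 0))
    (hnn : ∀ x : ℝ, 0 ≤ x → 0 ≤ f x) (hm : OperatorMonotone f) :
    ∃ (g : Set.Icc (0 : ℝ) 1 → ℝ) (D : Set (Set.Icc (0 : ℝ) 1))
      (a : Set.Icc (0 : ℝ) 1 → ℝ) (μsc : Measure (Set.Icc (0 : ℝ) 1)),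
      -- the density of the absolutely continuous part
      (∀ t, 0 ≤ g t) ∧ Integrable g lebIcc ∧
      -- the data of the singularly discrete part
      D.Countable ∧ (∀ t ∈ D, 0 ≤ a t) ∧ Summable (fun t : D => a (t : Set.Icc (0 : ℝ) 1)) ∧
      -- the measure of the singularly continuous part
      IsFiniteMeasure μsc ∧ (∀ t, μsc {t} = 0) ∧ Measure.MutuallySingular μsc lebIcc ∧
      -- the decomposition
      (∀ x : ℝ, 0 ≤ x →
        f x = (∫ t, g t * whm (t : ℝ) x ∂lebIcc) +
          (∑' s : D, a (s : Set.Icc (0 : ℝ) 1) * whm ((s : Set.Icc (0 : ℝ) 1) : ℝ) x) +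
          ∫ t, whm (t : ℝ) x ∂μsc) ∧
      -- each summand is operator monotone
      OperatorMonotone (fun x => ∫ t, g t * whm (t : ℝ) x ∂lebIcc) ∧
      OperatorMonotone
        (fun x => ∑' s : D, a (s : Set.Icc (0 : ℝ) 1) * whm ((s : Set.Icc (0 : ℝ) 1) : ℝ) x) ∧
      OperatorMonotone (fun x => ∫ t, whm (t : ℝ) x ∂μsc) := by
  obtain ⟨μ, hμ, hrep⟩ := exists_meas0 f hc hnn hm
  have hfin : IsFiniteMeasure lebIcc := by
    constructor
    unfold lebIcc
    rw [Measure.comap_apply _ Subtype.val_injective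
      (fun s hs => measurableSet_Icc.subtype_image hs) _ MeasurableSet.univ, Set.image_univ,
      Subtype.range_coe]
    exact measure_Icc_lt_top
  set σ := μ.singularPart lebIcc with hσ
  have hdec : μ = σ + lebIcc.withDensity (μ.rnDeriv lebIcc) :=
    Measure.haveLebesgueDecomposition_add μ lebIcc
  have hσfin : IsFiniteMeasure σ := inferInstance
  set D : Set (Set.Icc (0:ℝ) 1) := {t | 0 < σ {t}} with hD
  have hDc : D.Countable := by
    have := Measure.countable_meas_level_set_pos (μ := σ) (g := fun t : Set.Icc (0:ℝ) 1 => t)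
      measurable_id
    simpa using this
  have hsum : ∀ x : ℝ, 0 ≤ x → ∫ t, whm (t : ℝ) x ∂(σ.restrict D) =
      ∑' s : D, (σ {(s : Set.Icc (0:ℝ) 1)}).toReal * whm ((s : Set.Icc (0 : ℝ) 1) : ℝ) x := by
    intro x hx
    exact setIntegral_countable _ hDc (whm_integrable σ x hx).integrableOn
  have hgi : Integrable (fun t => (μ.rnDeriv lebIcc t).toReal) lebIcc :=
    Measure.integrable_toReal_rnDeriv
  have hgw : ∀ x : ℝ, 0 ≤ x →
      Integrable (fun t : Set.Icc (0:ℝ) 1 => (μ.rnDeriv lebIcc t).toReal * whm (t:ℝ) x) lebIcc := by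
    intro x hx
    refine hgi.mul_bdd (c := max 1 x) (whm_measurable x).aestronglyMeasurable ?_
    refine Filter.Eventually.of_forall fun t => ?_
    rw [Real.norm_of_nonneg (whm_nonneg t t.2 x hx)]
    exact whm_le t t.2 x hx
  refine ⟨fun t => (μ.rnDeriv lebIcc t).toReal, D, fun t => (σ {t}).toReal, σ.restrict Dᶜ,
    fun t => ENNReal.toReal_nonneg, hgi, hDc, fun t _ => ENNReal.toReal_nonneg, ?_, inferInstance,
    ?_, ?_, ?_, ?_, ?_, ?_⟩
  · apply ENNReal.summable_toReal
    refine ne_top_of_le_ne_top (measure_ne_top σ (⋃ t : D, {(t : Set.Icc (0:ℝ) 1)})) ?_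
    refine tsum_meas_le_meas_iUnion_of_disjoint σ (fun t => measurableSet_singleton _) ?_
    intro s t hst
    simpa [Function.onFun] using fun h => hst (Subtype.ext h)
  · intro t
    rw [Measure.restrict_apply (measurableSet_singleton t)]
    by_cases ht : t ∈ D
    · have : ({t} : Set (Set.Icc (0:ℝ) 1)) ∩ Dᶜ = ∅ := by
        ext s; simp only [Set.mem_inter_iff, Set.mem_singleton_iff, Set.mem_compl_iff,
          Set.mem_empty_iff_false, iff_false, not_and, not_not]
        rintro rfl; exact ht
      rw [this, measure_empty]
    · refine measure_mono_null Set.inter_subset_left ?_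
      simpa [hD] using ht
  · exact (Measure.mutuallySingular_singularPart μ lebIcc).mono
      Measure.restrict_le_self le_rfl
  · intro x hx
    have hi := whm_integrable μ x hx
    have hw : lebIcc.withDensity (μ.rnDeriv lebIcc) ≤ μ := Measure.withDensity_rnDeriv_le μ lebIcc
    have h1 : ∫ t, whm (t : ℝ) x ∂μ = ∫ t, whm (t : ℝ) x ∂σ +
        ∫ t, whm (t : ℝ) x ∂(lebIcc.withDensity (μ.rnDeriv lebIcc)) := by
      conv_lhs => rw [hdec]
      exact integral_add_measure (whm_integrable σ x hx) (hi.mono_measure hw)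
    have h2 : ∫ t, whm (t : ℝ) x ∂(lebIcc.withDensity (μ.rnDeriv lebIcc)) =
        ∫ t, (μ.rnDeriv lebIcc t).toReal * whm (t : ℝ) x ∂lebIcc :=
      integral_withDensity_eq_integral_toReal_smul (Measure.measurable_rnDeriv _ _)
        (Measure.rnDeriv_lt_top _ _) _
    have h3 := integral_add_compl hDc.measurableSet (whm_integrable σ x hx)
    rw [hrep x hx, h1, h2, ← hsum x hx, ← h3]
    ring
  · exact opMono_integral lebIcc (fun t x => (μ.rnDeriv lebIcc t).toReal * whm (t : ℝ) x)
      (fun t => opMono_const_mul _ ENNReal.toReal_nonneg _ (opMono_whm t t.2)) hgw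
  · exact opMono_congr _ _ (opMono_integral (σ.restrict D) (fun t x => whm (t : ℝ) x)
      (fun t => opMono_whm t t.2) (fun x hx => whm_integrable _ x hx)) hsum
  · exact opMono_integral (σ.restrict Dᶜ) (fun t x => whm (t : ℝ) x)
      (fun t => opMono_whm t t.2) (fun x hx => whm_integrable _ x hx)
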